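/- (Local-to-global order condition.) Let μ : W → V be a collection such that μ_{v s_i} ≥_v μ_v for all v ∈ W and all i ∈ I. Then μ_{w'} ≥_w μ_w for all w, w' ∈ W. -/

import Mathlib

/-!
Membership in the coroot cone is membership in `V` together with nonnegativity of the initial
partial sums, which are exactly the coefficients on the simple coroots (`mem_corootCone_iff`).

Comparing the hypothesis at `v` with the one at `v s_i` shows that all partial sums of
`v⁻¹ (μ_{v s_i} - μ_v)` except the `i`-th are both `≥ 0` and `≤ 0`, because `s_i` preserves them.
Hence `μ_{v s_i} - μ_v = c · v h_i` with `c ≥ 0` (`edge`).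

Now write `w' = w u` and sort `u` by removing descents one at a time. If `u = u' s_i` with
`u'(i) < u'(i+1)`, then `μ_{wu} - μ_{wu'} = c · w (u' h_i)` and `u' h_i = e_{u'(i)} - e_{u'(i+1)}`
is a positive coroot, so `μ_{wu} ≥_w μ_{wu'}`. The weighted sum `Σ (ℓ - k) u(k)` strictly
decreases with each descent removed, so the process ends at `u = 1`.
-/

namespace MV

/-- The action of a permutation `w` on `ℝ^N`: `(w·x)_k = x_{w⁻¹(k)}`. -/
def act (ℓ : ℕ) (w : Equiv.Perm (Fin (ℓ+1))) (x : Fin (ℓ+1) → ℝ) : Fin (ℓ+1) → ℝ :=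
  fun k => x (w⁻¹ k)

/-- The subspace `V = {x ∈ ℝ^N : Σ x_k = 0}`. -/
def Vsub (ℓ : ℕ) : Set (Fin (ℓ+1) → ℝ) := {x | ∑ k, x k = 0}

/-- The simple coroot `h_i = e_i - e_{i+1}` (here `i : Fin ℓ` encodes the 1-based index `i+1`). -/
def coroot (ℓ : ℕ) (i : Fin ℓ) : Fin (ℓ+1) → ℝ :=
  fun k => (if (k : ℕ) = (i : ℕ) then 1 else 0) - (if (k : ℕ) = (i : ℕ) + 1 then 1 else 0)

/-- The cone `Σ_{j∈I} ℝ_{≥0} h_j`. -/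
def corootCone (ℓ : ℕ) : Set (Fin (ℓ+1) → ℝ) :=
  {x | ∃ c : Fin ℓ → ℝ, (∀ j, 0 ≤ c j) ∧ x = ∑ j, c j • coroot ℓ j}

/-- The partial order `h ≥_w h'`. -/
def geOrd (ℓ : ℕ) (w : Equiv.Perm (Fin (ℓ+1))) (h h' : Fin (ℓ+1) → ℝ) : Prop :=
  act ℓ w⁻¹ (h - h') ∈ corootCone ℓ

/-- The simple reflection `s_i`, the transposition of (1-based) `i` and `i+1`. -/
def simpleRefl (ℓ : ℕ) (i : Fin ℓ) : Equiv.Perm (Fin (ℓ+1)) :=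
  Equiv.swap i.castSucc i.succ

/-- The longest element `w₀ : k ↦ N+1-k`. -/
def w0 (ℓ : ℕ) : Equiv.Perm (Fin (ℓ+1)) := Fin.revPerm

/-- The chamber weight functional `w·Λ_i : x ↦ x_{w(1)} + ⋯ + x_{w(i)}`. -/
def chamberWt (ℓ : ℕ) (w : Equiv.Perm (Fin (ℓ+1))) (i : Fin ℓ) (x : Fin (ℓ+1) → ℝ) : ℝ :=
  ∑ k ∈ Finset.univ.filter (fun k : Fin (ℓ+1) => (k : ℕ) ≤ (i : ℕ)), x (w k)

/-- The set `𝒱` of GGMS data. -/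
def calV (ℓ : ℕ) : Set (Equiv.Perm (Fin (ℓ+1)) → Fin (ℓ+1) → ℝ) :=
  {μ | (∀ w, μ w ∈ Vsub ℓ) ∧ (∀ w w', geOrd ℓ w (μ w') (μ w)) ∧ μ (w0 ℓ) = 0}

/-- The Cartan matrix of type `A_ℓ`. -/
def cartan (ℓ : ℕ) (i j : Fin ℓ) : ℝ :=
  if i = j then 2 else if (i : ℕ) + 1 = (j : ℕ) ∨ (j : ℕ) + 1 = (i : ℕ) then -1 else 0

/-- The linear involution `J : (Jx)_k = -x_{N+1-k}`. -/
def Jmap (ℓ : ℕ) (x : Fin (ℓ+1) → ℝ) : Fin (ℓ+1) → ℝ := fun k => - x k.rev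

/-- Nat-indexed (0-based) simple coroot, used for the folded coroots. -/
def corootN (ℓ : ℕ) (j : ℕ) : Fin (ℓ+1) → ℝ :=
  fun k => (if (k : ℕ) = j then 1 else 0) - (if (k : ℕ) = j + 1 then 1 else 0)

/-- The folded simple coroot `h_j^ω` (here `j : Fin n` encodes the 1-based index `j+1`):
`h_j^ω = h_j + h_{ℓ+1-j}` for `1 ≤ j ≤ n-1`, `h_n^ω = h_n` if `ℓ = 2n-1`, and
`h_n^ω = 2(h_n + h_{n+1})` if `ℓ = 2n`. -/
def fcoroot (ℓ n : ℕ) (j : Fin n) : Fin (ℓ+1) → ℝ :=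
  if (j : ℕ) + 1 < n then corootN ℓ j + corootN ℓ (ℓ - 1 - j)
  else if ℓ = 2 * n - 1 then corootN ℓ j
  else (2 : ℝ) • (corootN ℓ j + corootN ℓ ((j : ℕ) + 1))

/-- The folded coroot cone `Σ_{j=1}^{n} ℝ_{≥0} h_j^ω`. -/
def fcone (ℓ n : ℕ) : Set (Fin (ℓ+1) → ℝ) :=
  {x | ∃ c : Fin n → ℝ, (∀ j, 0 ≤ c j) ∧ x = ∑ j, c j • fcoroot ℓ n j}


/-- The simple transposition `s_{a+1}` (0-based `a`) in the symmetric group of `{1,…,m+1}`. -/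
def swN (m a : ℕ) : Equiv.Perm (Fin (m+1)) :=
  if h : a + 1 ≤ m then Equiv.swap ⟨a, by omega⟩ ⟨a + 1, by omega⟩ else 1

end MV

open MV

namespace MV

/-- The sum of the coordinates of `x` up to and including position `m`. -/
def psum {ℓ : ℕ} (m : Fin ℓ) (x : Fin (ℓ+1) → ℝ) : ℝ :=
  ∑ k : Fin (ℓ+1), if (k : ℕ) ≤ m then x k else 0

lemma psum_add {ℓ : ℕ} (m : Fin ℓ) (x y : Fin (ℓ+1) → ℝ) :
    psum m (x + y) = psum m x + psum m y := by
  simp only [psum, ← Finset.sum_add_distrib]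
  refine Finset.sum_congr rfl fun k _ => ?_
  split_ifs <;> simp

lemma psum_smul {ℓ : ℕ} (m : Fin ℓ) (c : ℝ) (x : Fin (ℓ+1) → ℝ) :
    psum m (c • x) = c * psum m x := by
  simp only [psum, Finset.mul_sum]
  refine Finset.sum_congr rfl fun k _ => ?_
  split_ifs <;> simp

lemma psum_sum {ℓ : ℕ} (m : Fin ℓ) (f : Fin ℓ → Fin (ℓ+1) → ℝ) :
    psum m (∑ j, f j) = ∑ j, psum m (f j) := by
  simp only [psum, Finset.sum_apply]
  rw [Finset.sum_comm]
  refine Finset.sum_congr rfl fun k _ => ?_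
  split_ifs <;> simp

lemma coroot_apply {ℓ : ℕ} (i : Fin ℓ) (k : Fin (ℓ+1)) :
    coroot ℓ i k = (if k = i.castSucc then 1 else 0) - (if k = i.succ then 1 else 0) := by
  simp [coroot, Fin.ext_iff]

/-- The partial sums of `u h_i = e_{u(i)} - e_{u(i+1)}`. -/
lemma psum_coroot_perm {ℓ : ℕ} (m i : Fin ℓ) (u : Equiv.Perm (Fin (ℓ+1))) :
    psum m (fun k => coroot ℓ i (u⁻¹ k)) =
      (if (u i.castSucc : ℕ) ≤ m then 1 else 0) - (if (u i.succ : ℕ) ≤ m then 1 else 0) := by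
  have h : ∀ k : Fin (ℓ+1), (if (k : ℕ) ≤ m then coroot ℓ i (u⁻¹ k) else 0) =
      (if k = u i.castSucc then (if (k : ℕ) ≤ m then (1:ℝ) else 0) else 0) -
      (if k = u i.succ then (if (k : ℕ) ≤ m then (1:ℝ) else 0) else 0) := by
    intro k
    simp only [coroot_apply, Equiv.Perm.inv_eq_iff_eq]
    split_ifs <;> simp
  simp only [psum, h, Finset.sum_sub_distrib, Finset.sum_ite_eq', Finset.mem_univ, if_true]

lemma sum_coroot {ℓ : ℕ} (i : Fin ℓ) : ∑ k, coroot ℓ i k = 0 := by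
  simp [coroot_apply]

lemma psum_coroot {ℓ : ℕ} (m i : Fin ℓ) : psum m (coroot ℓ i) = if i = m then 1 else 0 := by
  have h := psum_coroot_perm m i 1
  simp only [inv_one, Equiv.Perm.coe_one, id] at h
  rw [show coroot ℓ i = fun k => coroot ℓ i k from rfl, h]
  rcases lt_trichotomy i m with h | h | h
  · simp [h, h.le, h.ne]
  · simp [h]
  · simp [h.not_ge, h.not_gt, h.ne.symm]

/-- A vector is determined by its total and its partial sums. -/
lemma eq_of_psum {ℓ : ℕ} {x y : Fin (ℓ+1) → ℝ} (h0 : ∑ k, x k = ∑ k, y k)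
    (h : ∀ m, psum m x = psum m y) : x = y := by
  -- Partial sums with an arbitrary natural bound; consecutive differences are the coordinates.
  have full : ∀ n : ℕ, (∑ k : Fin (ℓ+1), if (k : ℕ) < n then x k else 0) =
      ∑ k : Fin (ℓ+1), if (k : ℕ) < n then y k else 0 := by
    intro n
    rcases Nat.eq_zero_or_pos n with rfl | hn
    · simp
    · by_cases hl : n ≤ ℓ
      · have := h ⟨n - 1, by omega⟩
        simp only [psum] at this
        have e : ∀ k : Fin (ℓ+1), (k : ℕ) ≤ n - 1 ↔ (k : ℕ) < n := fun k => by omega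
        simpa only [e] using this
      · have e : ∀ k : Fin (ℓ+1), (k : ℕ) < n := fun k => by omega
        simpa only [e, if_true] using h0
  have key : ∀ (z : Fin (ℓ+1) → ℝ) (a : Fin (ℓ+1)),
      (∑ k : Fin (ℓ+1), if (k : ℕ) < a + 1 then z k else 0) -
      (∑ k : Fin (ℓ+1), if (k : ℕ) < a then z k else 0) = z a := by
    intro z a
    rw [← Finset.sum_sub_distrib, Finset.sum_eq_single a]
    · simp
    · intro k _ hk
      have : (k : ℕ) ≠ a := fun h => hk (Fin.ext h)
      split_ifs <;> first | omega | simp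
    · simp
  funext a
  rw [← key x a, ← key y a, full, full]

lemma mem_corootCone_iff {ℓ : ℕ} (x : Fin (ℓ+1) → ℝ) :
    x ∈ corootCone ℓ ↔ ∑ k, x k = 0 ∧ ∀ m, 0 ≤ psum m x := by
  have hs : ∀ c : Fin ℓ → ℝ, ∑ k, (∑ j, c j • coroot ℓ j) k = 0 := by
    intro c
    simp only [Finset.sum_apply, Pi.smul_apply, smul_eq_mul]
    rw [Finset.sum_comm]
    simp [← Finset.mul_sum, sum_coroot]
  have hp : ∀ (c : Fin ℓ → ℝ) m, psum m (∑ j, c j • coroot ℓ j) = c m := by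
    intro c m
    simp [psum_sum, psum_smul, psum_coroot]
  constructor
  · rintro ⟨c, hc, rfl⟩
    exact ⟨hs c, fun m => (hp c m).symm ▸ hc m⟩
  · rintro ⟨h0, h⟩
    exact ⟨fun m => psum m x, h, eq_of_psum (h0.trans (hs _).symm) fun m =>
      (hp (fun m => psum m x) m).symm⟩

lemma act_inv_sub {ℓ : ℕ} (w : Equiv.Perm (Fin (ℓ+1))) (x y : Fin (ℓ+1) → ℝ) :
    act ℓ w⁻¹ (x - y) = fun k => x (w k) - y (w k) := by
  funext k
  simp [act]

/-- `s_i` preserves every initial segment except the one ending at `i`. -/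
lemma psum_swap {ℓ : ℕ} (m i : Fin ℓ) (hm : m ≠ i) (x : Fin (ℓ+1) → ℝ) :
    psum m (fun k => x (simpleRefl ℓ i k)) = psum m x := by
  simp only [psum]
  rw [← Equiv.sum_comp (simpleRefl ℓ i) (fun k : Fin (ℓ+1) => if (k : ℕ) ≤ m then x k else 0)]
  refine Finset.sum_congr rfl fun k _ => ?_
  have hm' : (m : ℕ) ≠ i := fun h => hm (Fin.ext h)
  have : ((simpleRefl ℓ i k : Fin (ℓ+1)) : ℕ) ≤ m ↔ (k : ℕ) ≤ m := by
    rw [simpleRefl, Equiv.swap_apply_def]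
    split_ifs with h1 h2
    · subst h1
      simp only [Fin.val_castSucc, Fin.val_succ]
      omega
    · subst h2
      simp only [Fin.val_castSucc, Fin.val_succ]
      omega
    · rfl
  simp only [this]

/-- The difference along an edge `v — v s_i` is a nonnegative multiple of `v h_i`. -/
lemma edge {ℓ : ℕ} {μ : Equiv.Perm (Fin (ℓ+1)) → Fin (ℓ+1) → ℝ}
    (hloc : ∀ (v : Equiv.Perm (Fin (ℓ+1))) (i : Fin ℓ),
      geOrd ℓ v (μ (v * simpleRefl ℓ i)) (μ v))
    (v : Equiv.Perm (Fin (ℓ+1))) (i : Fin ℓ) :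
    ∃ c : ℝ, 0 ≤ c ∧ ∀ k, μ (v * simpleRefl ℓ i) k - μ v k = c * coroot ℓ i (v⁻¹ k) := by
  set x : Fin (ℓ+1) → ℝ := fun k => μ (v * simpleRefl ℓ i) (v k) - μ v (v k) with hx
  have h1 : ∑ k, x k = 0 ∧ ∀ m, 0 ≤ psum m x := by
    have := (mem_corootCone_iff _).1 (hloc v i)
    rwa [act_inv_sub] at this
  have h2 : ∀ m, 0 ≤ psum m ((-1 : ℝ) • fun k => x (simpleRefl ℓ i k)) := by
    have hss : v * simpleRefl ℓ i * simpleRefl ℓ i = v := by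
      simp [mul_assoc, simpleRefl]
    have := ((mem_corootCone_iff _).1 (hloc (v * simpleRefl ℓ i) i)).2
    rw [hss] at this
    intro m
    convert this m using 2
    funext k
    simp [act, hx]
  refine ⟨psum i x, h1.2 i, fun k => ?_⟩
  have hxe : x = psum i x • coroot ℓ i := by
    apply eq_of_psum
    · simp [h1.1, ← Finset.mul_sum, sum_coroot]
    · intro m
      rw [psum_smul, psum_coroot]
      by_cases hm : i = m
      · simp [hm]
      · have a := h1.2 m
        have b := h2 m
        rw [psum_smul, psum_swap m i (Ne.symm hm)] at b
        simp only [hm, if_false, mul_zero]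
        linarith
  have := congrFun hxe (v⁻¹ k)
  simpa [hx] using this

/-- Sorting potential: it strictly drops when a descent is removed. -/
def pot {ℓ : ℕ} (u : Equiv.Perm (Fin (ℓ+1))) : ℕ :=
  ∑ k : Fin (ℓ+1), (ℓ - (k : ℕ)) * (u k : ℕ)

lemma pot_lt {ℓ : ℕ} (u : Equiv.Perm (Fin (ℓ+1))) (i : Fin ℓ) (h : u i.succ < u i.castSucc) :
    pot (u * simpleRefl ℓ i) < pot u := by
  have hne : i.castSucc ≠ i.succ := (Fin.castSucc_lt_succ).ne
  have split : ∀ f : Fin (ℓ+1) → ℕ, ∑ k, f k = f i.castSucc + (f i.succ +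
      ∑ k ∈ (Finset.univ.erase i.castSucc).erase i.succ, f k) := by
    intro f
    rw [Finset.add_sum_erase _ _ (by simp [hne.symm]), Finset.add_sum_erase _ _ (by simp)]
  unfold pot
  rw [split, split (fun k => (ℓ - (k : ℕ)) * (u k : ℕ))]
  have hrest : ∑ k ∈ (Finset.univ.erase i.castSucc).erase i.succ,
      (ℓ - (k : ℕ)) * ((u * simpleRefl ℓ i) k : ℕ) =
      ∑ k ∈ (Finset.univ.erase i.castSucc).erase i.succ, (ℓ - (k : ℕ)) * (u k : ℕ) := by
    refine Finset.sum_congr rfl fun k hk => ?_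
    simp only [Finset.mem_erase, Finset.mem_univ, and_true] at hk
    simp [simpleRefl, Equiv.swap_apply_of_ne_of_ne hk.2 hk.1]
  rw [hrest]
  simp only [simpleRefl, Equiv.Perm.mul_apply, Equiv.swap_apply_left, Equiv.swap_apply_right,
    Fin.val_castSucc, Fin.val_succ]
  obtain ⟨d, hd⟩ : ∃ d, ℓ - (i : ℕ) = d + 1 := ⟨ℓ - i - 1, by omega⟩
  rw [hd, show ℓ - ((i : ℕ) + 1) = d by omega]
  have := Fin.lt_def.1 h
  nlinarith

lemma exists_descent {ℓ : ℕ} (u : Equiv.Perm (Fin (ℓ+1))) (hu : u ≠ 1) :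
    ∃ i : Fin ℓ, u i.succ < u i.castSucc := by
  by_contra! hcon
  apply hu
  have hmono : StrictMono u := Fin.strictMono_iff_lt_succ.2 fun i =>
    lt_of_le_of_ne (hcon i) fun h => (Fin.castSucc_lt_succ (i := i)).ne (u.injective h)
  have := Subsingleton.elim (hmono.orderIsoOfSurjective u u.surjective) (OrderIso.refl _)
  ext k
  exact congrArg Fin.val (DFunLike.congr_fun this k)

/-- Nonnegativity of the coefficients of `w⁻¹ (μ_{wu} - μ_w)`, by induction on the potential of `u`:
removing a descent of `u` changes the vector by a nonnegative multiple of a positive coroot. -/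
lemma psum_mono_mul {ℓ : ℕ} {μ : Equiv.Perm (Fin (ℓ+1)) → Fin (ℓ+1) → ℝ}
    (hloc : ∀ (v : Equiv.Perm (Fin (ℓ+1))) (i : Fin ℓ),
      geOrd ℓ v (μ (v * simpleRefl ℓ i)) (μ v))
    (w : Equiv.Perm (Fin (ℓ+1))) (m : Fin ℓ) (n : ℕ) :
    ∀ u : Equiv.Perm (Fin (ℓ+1)), pot u = n →
      0 ≤ psum m (fun k => μ (w * u) (w k) - μ w (w k)) := by
  induction n using Nat.strong_induction_on with
  | _ n ih =>
    intro u hn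
    by_cases hu : u = 1
    · subst hu
      simp [psum]
    · obtain ⟨i, hi⟩ := exists_descent u hu
      have hprev := ih _ (hn ▸ pot_lt u i hi) _ rfl
      set u' := u * simpleRefl ℓ i with hu'
      have huu : w * u' * simpleRefl ℓ i = w * u := by
        simp [hu', mul_assoc, simpleRefl]
      obtain ⟨c, hc, hedge⟩ := edge hloc (w * u') i
      rw [huu] at hedge
      have hsplit : (fun k => μ (w * u) (w k) - μ w (w k)) =
          (fun k => μ (w * u') (w k) - μ w (w k)) + c • fun k => coroot ℓ i (u'⁻¹ k) := by
        funext k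
        have := hedge (w k)
        rw [show (w * u')⁻¹ (w k) = u'⁻¹ k by simp] at this
        simp only [Pi.add_apply, Pi.smul_apply, smul_eq_mul]
        linarith
      rw [hsplit, psum_add, psum_smul, psum_coroot_perm]
      have hle : (u' i.castSucc : ℕ) ≤ u' i.succ := by
        have := Fin.lt_def.1 hi
        simp only [hu', simpleRefl, Equiv.Perm.mul_apply, Equiv.swap_apply_left,
          Equiv.swap_apply_right]
        omega
      refine add_nonneg hprev (mul_nonneg hc ?_)
      split_ifs <;> first | omega | simp

end MV

/-- local-to-global order condition: if `μ_{v s_i} ≥_v μ_v` for all `v, i`,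
then `μ_{w'} ≥_w μ_w` for all `w, w'`. -/
theorem stmt7 (ℓ : ℕ) (hℓ : 3 ≤ ℓ)
    (μ : Equiv.Perm (Fin (ℓ+1)) → Fin (ℓ+1) → ℝ) (hV : ∀ w, μ w ∈ Vsub ℓ)
    (hloc : ∀ (v : Equiv.Perm (Fin (ℓ+1))) (i : Fin ℓ),
      geOrd ℓ v (μ (v * simpleRefl ℓ i)) (μ v)) :
    ∀ w w', geOrd ℓ w (μ w') (μ w) := by
  intro w w'
  refine (mem_corootCone_iff _).2 ⟨?_, fun m => ?_⟩
  · have h : ∀ v, ∑ k, μ v (w k) = 0 := fun v => (Equiv.sum_comp w (μ v)).trans (hV v)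
    simp [act, Finset.sum_sub_distrib, h]
  · have := psum_mono_mul hloc w m _ (w⁻¹ * w') rfl
    rw [act_inv_sub]
    simpa using this
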